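/- Let X, B, Y be Banach spaces, let i : X → B be a compact bounded linear operator and let j : B → Y be an injective bounded linear operator. Let 1 ≤ p < ∞ and 0 < T < ∞, and let F be a family of strongly measurable functions f : (0,T) → X such that (i) the set {f : f ∈ F} is bounded in L^p(0,T;X), and (ii) sup_{f ∈ F} ‖(j∘i∘f)(·+h) − (j∘i∘f)(·)‖_{L^p(0,T−h;Y)} → 0 as h → 0⁺. Then the set {i∘f : f ∈ F} is relatively compact in L^p(0,T;B). -/

import Mathlib

open MeasureTheory ENNReal

theorem ehrling {X B Y : Type*} [NormedAddCommGroup X] [NormedSpace ℝ X]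
    [NormedAddCommGroup B] [NormedSpace ℝ B]
    [NormedAddCommGroup Y] [NormedSpace ℝ Y]
    (i : X →L[ℝ] B) (hi : IsCompactOperator i)
    (j : B →L[ℝ] Y) (hj : Function.Injective j) (η : ℝ) (hη : 0 < η) :
    ∃ C : ℝ, 0 ≤ C ∧ ∀ x, ‖i x‖ ≤ η * ‖x‖ + C * ‖j (i x)‖ := by
  obtain ⟨K, hK, hKs⟩ := hi.image_closedBall_subset_compact (𝕜₁ := ℝ) (f := (i : X →ₗ[ℝ] B)) 1
  have hK' : IsCompact (K ∩ {b | η ≤ ‖b‖}) :=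
    hK.inter_right (isClosed_le continuous_const continuous_norm)
  have hm : ∃ m : ℝ, 0 < m ∧ ∀ b ∈ K ∩ {b | η ≤ ‖b‖}, m ≤ ‖j b‖ := by
    rcases (K ∩ {b | η ≤ ‖b‖}).eq_empty_or_nonempty with h | h
    · exact ⟨1, one_pos, by simp [h]⟩
    · obtain ⟨b, hb, hmin⟩ := hK'.exists_isMinOn h (f := fun b => ‖j b‖)
        (by fun_prop)
      refine ⟨‖j b‖, ?_, fun c hc => hmin hc⟩
      rw [norm_pos_iff]
      intro h0
      have : b = 0 := hj (by simpa using h0)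
      have h2 := hb.2
      simp [this] at h2
      linarith
  obtain ⟨m, hm0, hm⟩ := hm
  refine ⟨‖i‖ / m, by positivity, fun x => ?_⟩
  by_cases hx : x = 0
  · simp [hx]
  have hxn : 0 < ‖x‖ := norm_pos_iff.2 hx
  set u : X := ‖x‖⁻¹ • x with hu
  have hun : ‖u‖ = 1 := by rw [hu, norm_smul]; simp [hxn.ne']
  have hxu : x = ‖x‖ • u := by rw [hu, smul_smul]; simp [hxn.ne']
  have key : ‖i u‖ ≤ η + ‖i‖ / m * ‖j (i u)‖ := by
    by_cases h : η ≤ ‖i u‖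
    · have h1 : m ≤ ‖j (i u)‖ := hm _ ⟨hKs ⟨u, by simp [hun], rfl⟩, h⟩
      have h2 : ‖i u‖ ≤ ‖i‖ := by simpa [hun] using i.le_opNorm u
      have h3 : ‖i‖ / m * m ≤ ‖i‖ / m * ‖j (i u)‖ := by gcongr
      have h4 : ‖i‖ / m * m = ‖i‖ := by field_simp
      linarith
    · have : 0 ≤ ‖i‖ / m * ‖j (i u)‖ := by positivity
      linarith
  have e1 : ‖i x‖ = ‖x‖ * ‖i u‖ := by
    conv_lhs => rw [hxu]
    simp [norm_smul]
  have e2 : ‖j (i x)‖ = ‖x‖ * ‖j (i u)‖ := by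
    conv_lhs => rw [hxu]
    simp [norm_smul]
  rw [e1, e2]
  nlinarith

theorem rpow_three (a b c : ℝ≥0∞) (r : ℝ) (hr : 0 ≤ r) :
    (a + b + c) ^ r ≤ 3 ^ r * (a ^ r + b ^ r + c ^ r) := by
  have h : a + b + c ≤ 3 * max (max a b) c := by
    have h1 : a ≤ max (max a b) c := by simp
    have h2 : b ≤ max (max a b) c := by simp
    have h3 : c ≤ max (max a b) c := by simp
    calc a + b + c ≤ max (max a b) c + max (max a b) c + max (max a b) c := by gcongr
      _ = 3 * max (max a b) c := by ring
  calc (a + b + c) ^ r ≤ (3 * max (max a b) c) ^ r := by gcongr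
    _ = 3 ^ r * (max (max a b) c) ^ r := ENNReal.mul_rpow_of_nonneg _ _ hr
    _ ≤ _ := by
      gcongr
      rcases max_choice (max a b) c with h | h <;> rw [h]
      · rcases max_choice a b with h | h <;> rw [h]
        · rw [add_assoc]; exact le_self_add
        · rw [add_comm (a ^ r), add_assoc]; exact le_self_add
      · exact le_add_self

/-- the k-th cell of the partition -/
def cell (h : ℝ) (k : ℕ) : Set ℝ := Set.Ioc (k * h) ((k + 1) * h)

theorem cell_meas (h : ℝ) (k : ℕ) : MeasurableSet (cell h k) := measurableSet_Ioc

theorem cell_vol (h : ℝ) (k : ℕ) : volume (cell h k) = ENNReal.ofReal h := by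
  rw [cell, Real.volume_Ioc]; congr 1; ring

theorem cell_disj (h : ℝ) (hh : 0 < h) : Pairwise (Function.onFun Disjoint (cell h)) := by
  intro k l hkl
  rw [Function.onFun, Set.disjoint_left]
  rintro x ⟨h1, h2⟩ ⟨h3, h4⟩
  have a1 : (k : ℝ) < l + 1 := by
    by_contra! hc
    nlinarith
  have a2 : (l : ℝ) < k + 1 := by
    by_contra! hc
    nlinarith
  apply hkl
  have b1 : k < l + 1 := by exact_mod_cast a1
  have b2 : l < k + 1 := by exact_mod_cast a2
  omega

theorem cell_union (h : ℝ) (hh : 0 < h) (N : ℕ) :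
    ⋃ k ∈ Finset.range N, cell h k = Set.Ioc 0 (N * h) := by
  induction N with
  | zero => simp
  | succ n ih =>
    rw [Finset.range_add_one, Finset.set_biUnion_insert, ih, Set.union_comm, cell]
    push_cast
    exact Set.Ioc_union_Ioc_eq_Ioc (by positivity) (by nlinarith)

theorem cell_sum (h : ℝ) (hh : 0 < h) (N : ℕ) (u : ℝ → ℝ≥0∞) :
    ∑ k ∈ Finset.range N, ∫⁻ t in cell h k, u t = ∫⁻ t in Set.Ioc 0 (N * h), u t := by
  rw [← cell_union h hh N, lintegral_biUnion_finset]
  · exact fun k _ l _ hkl => cell_disj h hh hkl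
  · exact fun k _ => cell_meas h k

theorem double_bound (h : ℝ) (hh : 0 < h) (N : ℕ) (G : ℝ → ℝ → ℝ≥0∞)
    (hG : Measurable (Function.uncurry G)) (hsym : ∀ s t, G s t = G t s) (hdiag : ∀ s, G s s = 0)
    (W : ℝ≥0∞) (hW : ∀ τ, 0 < τ → τ < h → ∫⁻ s in Set.Ioc 0 (N * h - τ), G s (s + τ) ≤ W) :
    ∑ k ∈ Finset.range N, ∫⁻ s in cell h k, ∫⁻ t in cell h k, G s t
      ≤ 2 * (ENNReal.ofReal h * W) := by
  set H : ℝ → ℝ → ℝ≥0∞ := fun s t => {q : ℝ × ℝ | q.1 < q.2}.indicator (Function.uncurry G) (s, t)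
    with hHdef
  have hH : Measurable (Function.uncurry H) :=
    hG.indicator (measurableSet_lt measurable_fst measurable_snd)
  have hGH : ∀ s t, G s t ≤ H s t + H t s := by
    intro s t
    rcases lt_trichotomy s t with hl | hl | hl
    · simp [H, Function.uncurry, hl]
    · simp [hl, hdiag]
    · simp [H, Function.uncurry, hl, hsym s t]
  have step1 : ∑ k ∈ Finset.range N, ∫⁻ s in cell h k, ∫⁻ t in cell h k, H s t
      ≤ ENNReal.ofReal h * W := by
    have e1 : ∀ k ∈ Finset.range N, ∫⁻ s in cell h k, ∫⁻ t in cell h k, H s t ≤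
        ∫⁻ s in cell h k, ∫⁻ τ in Set.Ioo 0 h, 
          (Set.Iic (N * h - τ)).indicator (fun s => G s (s + τ)) s := by
      intro k hk
      refine setLIntegral_mono' (cell_meas h k) fun s hs => ?_
      rw [← lintegral_indicator (cell_meas h k), ← lintegral_indicator measurableSet_Ioo,
        ← lintegral_add_left_eq_self _ s]
      refine lintegral_mono fun τ => ?_
      by_cases hτ : s + τ ∈ cell h k
      swap
      · simp [hτ]
      by_cases hτ0 : 0 < τ
      swap
      · simp [hτ0, H]
      obtain ⟨h1, h2⟩ := hτ
      obtain ⟨h3, h4⟩ := hs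
      have hkN : ((k : ℝ) + 1) ≤ N := by exact_mod_cast Finset.mem_range.1 hk
      have m1 : τ ∈ Set.Ioo 0 h := ⟨hτ0, by nlinarith⟩
      have m2 : s ∈ Set.Iic (N * h - τ) := by
        have : (k + 1) * h ≤ N * h := by gcongr
        simp only [Set.mem_Iic]; linarith
      rw [Set.indicator_of_mem (show s + τ ∈ cell h k from ⟨h1, h2⟩), Set.indicator_of_mem m1,
        Set.indicator_of_mem m2]
      simp [H, hτ0, Function.uncurry]
    refine (Finset.sum_le_sum e1).trans ?_
    rw [cell_sum h hh N, lintegral_lintegral_swap]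
    · calc _ ≤ ∫⁻ τ in Set.Ioo 0 h, W := by
            refine setLIntegral_mono' measurableSet_Ioo fun τ hτ => ?_
            rw [lintegral_indicator measurableSet_Iic, Measure.restrict_restrict measurableSet_Iic]
            refine le_trans (lintegral_mono_set ?_) (hW τ hτ.1 hτ.2)
            rintro x ⟨h1, h2⟩
            exact ⟨h2.1, h1⟩
        _ = _ := by simp [mul_comm]
    · apply Measurable.aemeasurable
      have : (Function.uncurry fun (s τ : ℝ) => 
          (Set.Iic (N * h - τ)).indicator (fun s => G s (s + τ)) s) =
          {q : ℝ × ℝ | q.1 ≤ N * h - q.2}.indicator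
            (fun q => Function.uncurry G (q.1, q.1 + q.2)) := by
        ext ⟨a, b⟩
        simp [Function.uncurry, Set.indicator]
      rw [this]
      exact (hG.comp (by fun_prop)).indicator (measurableSet_le (by fun_prop) (by fun_prop))
  calc _ ≤ ∑ k ∈ Finset.range N, ((∫⁻ s in cell h k, ∫⁻ t in cell h k, H s t) +
            ∫⁻ s in cell h k, ∫⁻ t in cell h k, H s t) := by
        refine Finset.sum_le_sum fun k _ => ?_
        have hsw : ∫⁻ s in cell h k, ∫⁻ t in cell h k, H s t =
          ∫⁻ s in cell h k, ∫⁻ t in cell h k, H t s := lintegral_lintegral_swap hH.aemeasurable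
        calc _ ≤ ∫⁻ s in cell h k, ∫⁻ t in cell h k, (H s t + H t s) :=
              lintegral_mono fun s => lintegral_mono fun t => hGH s t
          _ = ∫⁻ s in cell h k, ((∫⁻ t in cell h k, H s t) + ∫⁻ t in cell h k, H t s) := by
              refine lintegral_congr fun s => ?_
              exact lintegral_add_left (hH.comp measurable_prodMk_left) _
          _ = (∫⁻ s in cell h k, ∫⁻ t in cell h k, H s t) +
                ∫⁻ s in cell h k, ∫⁻ t in cell h k, H t s :=
              lintegral_add_left hH.lintegral_prod_right' _
          _ = _ := by rw [← hsw]
          _ ≤ _ := le_rfl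
    _ ≤ _ := by
      rw [Finset.sum_add_distrib, two_mul]
      gcongr

theorem choose_pts (h : ℝ) (hh : 0 < h) (N : ℕ) (Φ : ℝ → ℝ → ℝ≥0∞)
    (hΦ : Measurable (Function.uncurry Φ)) :
    ∃ s : ℕ → ℝ, (∀ k, s k ∈ cell h k) ∧
      ∑ k ∈ Finset.range N, ∫⁻ t in cell h k, Φ (s k) t ≤
      (∑ k ∈ Finset.range N, ∫⁻ s in cell h k, ∫⁻ t in cell h k, Φ s t) / ENNReal.ofReal h := by
  have : ∀ k, ∃ x ∈ cell h k, ∫⁻ t in cell h k, Φ x t ≤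
      ⨍⁻ s in cell h k, (∫⁻ t in cell h k, Φ s t) ∂volume := fun k =>
    exists_le_setLAverage (by simp [cell_vol, hh]) (by simp [cell_vol])
      (hΦ.lintegral_prod_right' (ν := volume.restrict (cell h k))).aemeasurable
  choose s hs hs' using this
  refine ⟨s, hs, (Finset.sum_le_sum fun k _ => hs' k).trans (le_of_eq ?_)⟩
  simp_rw [setLAverage_eq, cell_vol, div_eq_mul_inv]
  rw [Finset.sum_mul]

theorem core {X B Y : Type*} [NormedAddCommGroup X] [NormedSpace ℝ X]
    [NormedAddCommGroup B] [NormedSpace ℝ B]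
    [NormedAddCommGroup Y] [NormedSpace ℝ Y]
    (i : X →L[ℝ] B) (j : B →L[ℝ] Y) (η C : ℝ≥0∞)
    (hE : ∀ x, ‖i x‖ₑ ≤ η * ‖x‖ₑ + C * ‖j (i x)‖ₑ)
    (r : ℝ) (hr : 0 < r) (f : ℝ → X) (hf : StronglyMeasurable f)
    (h : ℝ) (hh : 0 < h) (N : ℕ) (M W : ℝ≥0∞)
    (hM : ∫⁻ t in Set.Ioc 0 (N * h), ‖f t‖ₑ ^ r ≤ M)
    (hW : ∀ τ, 0 < τ → τ < h →
      ∫⁻ s in Set.Ioc 0 (N * h - τ), ‖j (i (f s)) - j (i (f (s + τ)))‖ₑ ^ r ≤ W) :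
    ∃ s : ℕ → ℝ, 
      (∑ k ∈ Finset.range N, ∫⁻ t in cell h k, ‖i (f t) - i (f (s k))‖ₑ ^ r) ≤
        3 ^ r * (2 * (η ^ r * M) + C ^ r * (2 * W)) ∧
      ∀ k < N, (η * ‖f (s k)‖ₑ) ^ r * ENNReal.ofReal h ≤
        3 ^ r * (2 * (η ^ r * M) + C ^ r * (2 * W)) := by
  set G : ℝ → ℝ → ℝ≥0∞ := fun s t => ‖j (i (f s)) - j (i (f t))‖ₑ ^ r with hGdef
  have hg : StronglyMeasurable fun s => j (i (f s)) :=
    (j.continuous.comp i.continuous).comp_stronglyMeasurable hf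
  have hGm : Measurable (Function.uncurry G) := by
    have : StronglyMeasurable fun q : ℝ × ℝ => j (i (f q.1)) - j (i (f q.2)) :=
      (hg.comp_measurable measurable_fst).sub (hg.comp_measurable measurable_snd)
    exact this.enorm.pow_const r
  have hfm : Measurable fun s => (η * ‖f s‖ₑ) ^ r := (hf.enorm.const_mul η).pow_const r
  set Φ : ℝ → ℝ → ℝ≥0∞ := fun s t =>
    3 ^ r * ((η * ‖f s‖ₑ) ^ r + (η * ‖f t‖ₑ) ^ r + C ^ r * G s t) with hΦdef
  have hΦm : Measurable (Function.uncurry Φ) := by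
    have h1 : Measurable fun q : ℝ × ℝ => (η * ‖f q.1‖ₑ) ^ r := hfm.comp measurable_fst
    have h2 : Measurable fun q : ℝ × ℝ => (η * ‖f q.2‖ₑ) ^ r := hfm.comp measurable_snd
    exact ((h1.add h2).add (hGm.const_mul (C ^ r))).const_mul _
  obtain ⟨s, hs, hsum⟩ := choose_pts h hh N Φ hΦm
  have h0 : ENNReal.ofReal h ≠ 0 := by simp [hh]
  have hD := double_bound h hh N G hGm (fun s t => by simp only [G]; rw [enorm_sub_rev])
    (fun s => by simp [G, hr]) W hW
  have hfM : ∑ k ∈ Finset.range N, ∫⁻ t in cell h k, (η * ‖f t‖ₑ) ^ r ≤ η ^ r * M := by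
    rw [cell_sum h hh N]
    simp_rw [ENNReal.mul_rpow_of_nonneg _ _ hr.le]
    rw [lintegral_const_mul _ (hf.enorm.pow_const r)]
    gcongr
  have htot : ∑ k ∈ Finset.range N, ∫⁻ t in cell h k, Φ (s k) t ≤
      3 ^ r * (2 * (η ^ r * M) + C ^ r * (2 * W)) := by
    refine hsum.trans (ENNReal.div_le_of_le_mul ?_)
    have e : ∀ k, ∫⁻ s in cell h k, ∫⁻ t in cell h k, Φ s t =
        3 ^ r * (2 * (ENNReal.ofReal h * ∫⁻ t in cell h k, (η * ‖f t‖ₑ) ^ r) +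
          C ^ r * ∫⁻ s in cell h k, ∫⁻ t in cell h k, G s t) := by
      intro k
      have e1 : ∀ s, ∫⁻ t in cell h k, Φ s t = 3 ^ r * ((ENNReal.ofReal h * (η * ‖f s‖ₑ) ^ r +
          ∫⁻ t in cell h k, (η * ‖f t‖ₑ) ^ r) + C ^ r * ∫⁻ t in cell h k, G s t) := by
        intro s
        have m1 : Measurable fun t => G s t := hGm.comp measurable_prodMk_left
        simp only [Φ]
        rw [lintegral_const_mul _ (by fun_prop), lintegral_add_left (by fun_prop),
          lintegral_add_left (by fun_prop), lintegral_const_mul _ m1, setLIntegral_const,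
          cell_vol, mul_comm (ENNReal.ofReal h)]
      have m2 : Measurable fun s => ∫⁻ t in cell h k, G s t := hGm.lintegral_prod_right'
      simp_rw [e1]
      rw [lintegral_const_mul _ (by fun_prop), lintegral_add_left (by fun_prop),
        lintegral_add_left (by fun_prop), lintegral_const_mul _ m2, lintegral_const_mul _ hfm,
        setLIntegral_const, cell_vol]
      ring
    simp_rw [e]
    rw [← Finset.mul_sum, Finset.sum_add_distrib, ← Finset.mul_sum, ← Finset.mul_sum,
      ← Finset.mul_sum]
    calc _ ≤ 3 ^ r * (2 * (ENNReal.ofReal h * (η ^ r * M)) +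
          C ^ r * (2 * (ENNReal.ofReal h * W))) := by gcongr
      _ = _ := by ring
  refine ⟨s, le_trans (Finset.sum_le_sum fun k _ => lintegral_mono fun t => ?_) htot, ?_⟩
  · calc ‖i (f t) - i (f (s k))‖ₑ ^ r
        ≤ (η * ‖f (s k)‖ₑ + η * ‖f t‖ₑ + C * ‖j (i (f (s k))) - j (i (f t))‖ₑ) ^ r := by
          gcongr
          rw [← map_sub]
          refine (hE _).trans ?_
          rw [map_sub, map_sub, enorm_sub_rev (j _)]
          gcongr
          rw [← mul_add]
          gcongr
          rw [add_comm]
          exact enorm_sub_le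
      _ ≤ _ := rpow_three _ _ _ r hr.le
      _ = _ := by rw [ENNReal.mul_rpow_of_nonneg C _ hr.le]
  · intro k hk
    refine le_trans ?_ ((Finset.single_le_sum (f := fun k => ∫⁻ t in cell h k, Φ (s k) t)
      (fun _ _ => zero_le) (Finset.mem_range.2 hk)).trans htot)
    rw [← cell_vol h k, ← setLIntegral_const]
    refine lintegral_mono fun t => ?_
    calc (η * ‖f (s k)‖ₑ) ^ r ≤ 1 * ((η * ‖f (s k)‖ₑ) ^ r + (η * ‖f t‖ₑ) ^ r + C ^ r * G (s k) t) := by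
          rw [one_mul, add_assoc]; exact le_self_add
      _ ≤ _ := by
        simp only [Φ]
        gcongr
        exact ENNReal.one_le_rpow (by norm_num) hr

theorem small_rpow (r : ℝ) (hr : 0 < r) (q : ℝ≥0∞) (hq : q ≠ 0) :
    ∃ η : ℝ, 0 < η ∧ ENNReal.ofReal η ^ r ≤ q := by
  have h1 : min q 1 ≠ ⊤ := ne_top_of_le_ne_top one_ne_top (min_le_right _ _)
  have h0 : 0 < min q 1 := lt_min (pos_iff_ne_zero.2 hq) one_pos
  refine ⟨((min q 1) ^ (1 / r)).toReal, ?_, ?_⟩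
  · exact ENNReal.toReal_pos (ENNReal.rpow_pos h0 h1).ne'
      (ENNReal.rpow_ne_top_of_nonneg (by positivity) h1)
  · rw [ENNReal.ofReal_toReal (ENNReal.rpow_ne_top_of_nonneg (by positivity) h1),
      ← ENNReal.rpow_mul, one_div_mul_cancel hr.ne', ENNReal.rpow_one]
    exact min_le_left _ _

theorem trans_congr {X B Y : Type*} [NormedAddCommGroup X] [NormedSpace ℝ X]
    [NormedAddCommGroup B] [NormedSpace ℝ B]
    [NormedAddCommGroup Y] [NormedSpace ℝ Y]
    (i : X →L[ℝ] B) (j : B →L[ℝ] Y) (p : ℝ≥0∞) (hp0 : p ≠ 0) (hp2 : p ≠ ⊤) (T τ : ℝ) (hτ : 0 < τ)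
    (f f' : ℝ → X) (hff : f =ᵐ[volume.restrict (Set.Ioo 0 T)] f') (e : ℝ≥0∞)
    (hle : eLpNorm (fun t => j (i (f (t + τ))) - j (i (f t))) p
        (volume.restrict (Set.Ioo 0 (T - τ))) ≤ e) :
    ∫⁻ s in Set.Ioc 0 (T - τ), ‖j (i (f' s)) - j (i (f' (s + τ)))‖ₑ ^ p.toReal ≤ e ^ p.toReal := by
  have hr : 0 < p.toReal := ENNReal.toReal_pos hp0 hp2
  rw [eLpNorm_eq_lintegral_rpow_enorm_toReal hp0 hp2, one_div, ENNReal.rpow_inv_le_iff hr] at hle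
  refine le_trans (le_of_eq ?_) hle
  rw [← restrict_Ioo_eq_restrict_Ioc]
  rw [Filter.EventuallyEq, ae_restrict_iff' measurableSet_Ioo] at hff
  have h2 := (measurePreserving_add_right volume τ).quasiMeasurePreserving.ae hff
  apply lintegral_congr_ae
  rw [Filter.EventuallyEq, ae_restrict_iff' measurableSet_Ioo]
  filter_upwards [hff, h2] with t h1 h2 ht
  rw [h1 ⟨ht.1, by linarith [ht.2]⟩, h2 ⟨by linarith [ht.1], by linarith [ht.2]⟩, enorm_sub_rev]

theorem step_continuous {B : Type*} [NormedAddCommGroup B] (p : ℝ≥0∞) [Fact (1 ≤ p)]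
    (μ : Measure ℝ) [IsFiniteMeasure μ] (h : ℝ) (N : ℕ) :
    Continuous fun b : Fin N → B => ∑ k : Fin N,
      indicatorConstLp (μ := μ) p (cell_meas h k) (measure_ne_top μ _) (b k) := by
  refine continuous_finsetSum _ fun k _ => ?_
  have : Continuous fun c : B =>
      indicatorConstLp (μ := μ) p (cell_meas h k) (measure_ne_top μ _) c := by
    let φ : B →+ Lp B p μ := AddMonoidHom.mk' (fun c : B =>
      indicatorConstLp (μ := μ) p (cell_meas h k) (measure_ne_top μ _) c)
      (fun a b => indicatorConstLp_add.symm)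
    refine AddMonoidHomClass.continuous_of_bound φ (μ.real (cell h k) ^ (1 / p.toReal)) fun x => ?_
    rw [mul_comm]
    exact norm_indicatorConstLp_le (hs := cell_meas h k) (hμs := measure_ne_top μ _)
  exact this.comp (continuous_apply k)

theorem step_edist {B : Type*} [NormedAddCommGroup B] (p : ℝ≥0∞) [Fact (1 ≤ p)] (hp2 : p ≠ ⊤)
    (h T : ℝ) (hh : 0 < h) (N : ℕ) (hN : N * h = T)
    (μ : Measure ℝ) [IsFiniteMeasure μ] (hμ : μ = volume.restrict (Set.Ioo 0 T))
    (g : Lp B p μ) (u : ℝ → B)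
    (hg : g =ᵐ[μ] u) (b : ℕ → B) (e : ℝ≥0∞)
    (he : ∑ k ∈ Finset.range N, ∫⁻ t in cell h k, ‖u t - b k‖ₑ ^ p.toReal ≤ e ^ p.toReal) :
    edist g (∑ k : Fin N, indicatorConstLp (μ := μ) p
      (cell_meas h k) (measure_ne_top _ _) (b k)) ≤ e := by
  have hp0 : p ≠ 0 := (lt_of_lt_of_le one_pos (Fact.out : 1 ≤ p)).ne'
  have hr : 0 < p.toReal := ENNReal.toReal_pos hp0 hp2
  have hS : (∑ k : Fin N, indicatorConstLp (μ := μ) p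
      (cell_meas h k) (measure_ne_top _ _) (b k) : Lp B p μ) =ᵐ[μ]
      fun t => ∑ k : Fin N, (cell h k).indicator (fun _ => b k) t := by
    refine (Lp.coeFn_fun_finsetSum _ _).trans ?_
    have : ∀ᵐ t ∂μ, ∀ k : Fin N, (indicatorConstLp (μ := μ) p
      (cell_meas h k) (measure_ne_top _ _) (b k) : Lp B p μ) t =
        (cell h k).indicator (fun _ => b k) t :=
      ae_all_iff.2 fun k => indicatorConstLp_coeFn
    filter_upwards [this] with t ht
    simp [ht]
  have hon : ∀ k < N, ∀ t ∈ cell h k,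
      ∑ l : Fin N, (cell h l).indicator (fun _ => b l) t = b k := by
    intro k hk t ht
    rw [Finset.sum_eq_single (⟨k, hk⟩ : Fin N)]
    · simp [ht]
    · intro l _ hl
      have : (l : ℕ) ≠ k := fun hc => hl (Fin.ext hc)
      exact Set.indicator_of_notMem
        (fun hc => Set.disjoint_left.1 (cell_disj h hh this) hc ht) _
    · simp
  rw [Lp.edist_def, eLpNorm_eq_lintegral_rpow_enorm_toReal hp0 hp2, one_div,
    ENNReal.rpow_inv_le_iff hr]
  refine le_trans (le_of_eq ?_) he
  have e1 : ∫⁻ t, ‖(g - (∑ k : Fin N, indicatorConstLp (μ := μ) p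
      (cell_meas h k) (measure_ne_top _ _) (b k) : Lp B p μ) : ℝ → B) t‖ₑ ^ p.toReal ∂μ =
      ∫⁻ t, ‖u t - ∑ k : Fin N, (cell h k).indicator (fun _ => b k) t‖ₑ ^ p.toReal ∂μ := by
    apply lintegral_congr_ae
    filter_upwards [hg, hS] with t h1 h2
    simp only [Pi.sub_apply]
    rw [h1, h2]
  rw [e1, hμ, restrict_Ioo_eq_restrict_Ioc, ← hN, ← cell_sum h hh N]
  refine Finset.sum_congr rfl fun k hk => ?_
  refine setLIntegral_congr_fun (cell_meas h k) fun t ht => ?_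
  rw [hon k (Finset.mem_range.1 hk) t ht]

/-- Aubin–Lions–Simon compactness theorem (finite exponent case). -/
theorem aubin_lions_simon
    {X B Y : Type*} [NormedAddCommGroup X] [NormedSpace ℝ X] [CompleteSpace X]
    [NormedAddCommGroup B] [NormedSpace ℝ B] [CompleteSpace B]
    [NormedAddCommGroup Y] [NormedSpace ℝ Y] [CompleteSpace Y]
    (i : X →L[ℝ] B) (hi : IsCompactOperator i)
    (j : B →L[ℝ] Y) (hj : Function.Injective j)
    (p : ℝ≥0∞) [hp1 : Fact (1 ≤ p)] (hp2 : p ≠ ⊤)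
    (T : ℝ) (hT : 0 < T)
    (F : Set (ℝ → X))
    (hmeas : ∀ f ∈ F, AEStronglyMeasurable f (volume.restrict (Set.Ioo 0 T)))
    (hbdd : ∃ C : ℝ≥0∞, C ≠ ⊤ ∧ ∀ f ∈ F,
      eLpNorm f p (volume.restrict (Set.Ioo 0 T)) ≤ C)
    (htrans : ∀ ε : ℝ, 0 < ε → ∃ δ : ℝ, 0 < δ ∧ ∀ h : ℝ, 0 < h → h < δ →
      ∀ f ∈ F, eLpNorm (fun t => j (i (f (t + h))) - j (i (f t))) p
        (volume.restrict (Set.Ioo 0 (T - h))) ≤ ENNReal.ofReal ε) :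
    IsCompact (closure {g : Lp B p (volume.restrict (Set.Ioo 0 T)) |
      ∃ f ∈ F, (g : ℝ → B) =ᵐ[volume.restrict (Set.Ioo 0 T)] fun t => i (f t)}) := by
  have hp0 : p ≠ 0 := (lt_of_lt_of_le one_pos hp1.out).ne'
  have hr : 0 < p.toReal := ENNReal.toReal_pos hp0 hp2
  set r := p.toReal with hrdef
  obtain ⟨C₀, hC₀, hbdd⟩ := hbdd
  set M := C₀ ^ r with hMdef
  have hM : M ≠ ⊤ := ENNReal.rpow_ne_top_of_nonneg hr.le hC₀
  have h3 : (3 : ℝ≥0∞) ^ r ≠ ⊤ := ENNReal.rpow_ne_top_of_nonneg hr.le (by norm_num)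
  refine TotallyBounded.isCompact_of_isClosed (TotallyBounded.closure ?_) isClosed_closure
  rw [Metric.totallyBounded_iff]
  intro ε hε
  -- it suffices to find a compact set such that everything is within `ε / 3`
  suffices hsuff : ∃ K : Set (Lp B p (volume.restrict (Set.Ioo 0 T))), IsCompact K ∧
      ∀ g : Lp B p (volume.restrict (Set.Ioo 0 T)),
        (∃ f ∈ F, (g : ℝ → B) =ᵐ[volume.restrict (Set.Ioo 0 T)] fun t => i (f t)) →
        ∃ g' ∈ K, edist g g' ≤ ENNReal.ofReal (ε / 3) by
    obtain ⟨K, hK, hKg⟩ := hsuff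
    obtain ⟨t, ht, hKt⟩ := Metric.totallyBounded_iff.1 hK.totallyBounded (ε / 3) (by positivity)
    refine ⟨t, ht, fun g hg => ?_⟩
    obtain ⟨g', hg', hd⟩ := hKg g hg
    have h1 := hKt hg'
    simp only [Set.mem_iUnion, Metric.mem_ball] at h1 ⊢
    obtain ⟨y, hy, hy'⟩ := h1
    refine ⟨y, hy, ?_⟩
    rw [edist_le_ofReal (by positivity)] at hd
    linarith [dist_triangle g g' y]
  set E := ENNReal.ofReal (ε / 3) ^ r with hEdef
  have hE0 : E / 2 ≠ 0 := by
    have : 0 < E := ENNReal.rpow_pos (by simp [hε]) ofReal_ne_top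
    simp [ENNReal.div_eq_zero_iff, this.ne']
  obtain ⟨η, hη, hηE⟩ := small_rpow r hr ((E / 2) / (3 ^ r * 2 * M))
    (ENNReal.div_ne_zero.2 ⟨hE0, by finiteness⟩)
  obtain ⟨C, hC, hEh⟩ := ehrling i hi j hj η hη
  have hCr : ENNReal.ofReal C ^ r ≠ ⊤ := ENNReal.rpow_ne_top_of_nonneg hr.le ofReal_ne_top
  obtain ⟨w, hw, hwE⟩ := small_rpow r hr ((E / 2) / (3 ^ r * 2 * ENNReal.ofReal C ^ r))
    (ENNReal.div_ne_zero.2 ⟨hE0, by finiteness⟩)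
  obtain ⟨δ, hδ, htr⟩ := htrans w hw
  obtain ⟨n, hn⟩ := exists_nat_gt (T / δ)
  have hn0 : (0 : ℝ) < n := lt_trans (by positivity) hn
  set h := T / n with hhdef
  have hh : 0 < h := by positivity
  have hnh : n * h = T := by rw [hhdef]; field_simp
  have hhδ : h < δ := by
    rw [hhdef, div_lt_iff₀ hn0]
    rw [div_lt_iff₀ hδ] at hn
    linarith
  set W := ENNReal.ofReal w ^ r with hWdef
  set A : ℝ≥0∞ := 3 ^ r * (2 * (ENNReal.ofReal η ^ r * M) + ENNReal.ofReal C ^ r * (2 * W))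
    with hAdef
  have hAE : A ≤ E := by
    calc A = 3 ^ r * 2 * M * ENNReal.ofReal η ^ r +
            3 ^ r * 2 * ENNReal.ofReal C ^ r * W := by rw [hAdef]; ring
      _ ≤ E / 2 + E / 2 := by
          gcongr
          · exact (mul_le_mul_right hηE _).trans ENNReal.mul_div_le
          · exact (mul_le_mul_right hwE _).trans ENNReal.mul_div_le
      _ = E := ENNReal.add_halves E
  have hAtop : A ≠ ⊤ :=
    ne_top_of_le_ne_top (ENNReal.rpow_ne_top_of_nonneg hr.le ofReal_ne_top) hAE
  have hη0 : ENNReal.ofReal η ≠ 0 := by simp [hη]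
  have hh0 : ENNReal.ofReal h ≠ 0 := by simp [hh]
  set R : ℝ≥0∞ := (A / ENNReal.ofReal h) ^ r⁻¹ / ENNReal.ofReal η with hRdef
  have hR : R ≠ ⊤ :=
    ENNReal.div_ne_top (ENNReal.rpow_ne_top_of_nonneg (by positivity)
      (ENNReal.div_ne_top hAtop hh0)) hη0
  obtain ⟨K, hK, hKs⟩ :=
    hi.image_closedBall_subset_compact (𝕜₁ := ℝ) (f := (i : X →ₗ[ℝ] B)) R.toReal
  refine ⟨_, (isCompact_univ_pi (fun _ : Fin n => hK)).image
    (step_continuous p (volume.restrict (Set.Ioo 0 T)) h n), ?_⟩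
  rintro g ⟨f, hfF, hgf⟩
  set f' := (hmeas f hfF).mk f with hf'
  have hff : f =ᵐ[volume.restrict (Set.Ioo 0 T)] f' := (hmeas f hfF).ae_eq_mk
  have hEe : ∀ x, ‖i x‖ₑ ≤ ENNReal.ofReal η * ‖x‖ₑ + ENNReal.ofReal C * ‖j (i x)‖ₑ := by
    intro x
    rw [← ofReal_norm, ← ofReal_norm, ← ofReal_norm,
      ← ENNReal.ofReal_mul hη.le, ← ENNReal.ofReal_mul hC,
      ← ENNReal.ofReal_add (by positivity) (by positivity)]
    exact ENNReal.ofReal_le_ofReal (hEh x)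
  obtain ⟨s, hs1, hs2⟩ := core i j (ENNReal.ofReal η) (ENNReal.ofReal C) hEe r hr f'
    (hmeas f hfF).stronglyMeasurable_mk h hh n M W
    (by
      have h1 := hbdd f hfF
      rw [eLpNorm_congr_ae hff, eLpNorm_eq_lintegral_rpow_enorm_toReal hp0 hp2, one_div,
        ENNReal.rpow_inv_le_iff hr] at h1
      rwa [hnh, ← restrict_Ioo_eq_restrict_Ioc])
    (by
      intro τ hτ hτh
      rw [hnh]
      exact trans_congr i j p hp0 hp2 T τ hτ f f' hff _ (htr τ hτ (hτh.trans hhδ) f hfF))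
  refine ⟨_, ⟨fun k => i (f' (s k)), ?_, rfl⟩, ?_⟩
  · intro k _
    refine hKs ⟨f' (s k), ?_, rfl⟩
    have h1 := hs2 k k.2
    rw [← ENNReal.le_div_iff_mul_le (Or.inl hh0) (Or.inl ofReal_ne_top),
      ← ENNReal.le_rpow_inv_iff hr, mul_comm,
      ← ENNReal.le_div_iff_mul_le (Or.inl hη0) (Or.inl ofReal_ne_top)] at h1
    rw [mem_closedBall_zero_iff, ← toReal_enorm]
    exact ENNReal.toReal_mono hR h1
  · refine step_edist p hp2 h T hh n hnh _ rfl g (fun t => i (f' t)) ?_ (fun k => i (f' (s k))) _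
      (hs1.trans hAE)
    filter_upwards [hgf, hff] with t h1 h2
    rw [h1, h2]
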